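/- arXiv:1508.07838 — 2 statements merged into one kernel-verified Lean document; each statement's English description precedes it below -/
import Mathlib

section
/- Let (E¹,𝓔¹),(E²,𝓔²),… be countable discrete measurable spaces and (E^∞,𝓔^∞) an arbitrary measurable space, and let Z₁, Z₂, …, Z be random elements in the product. Then Zₙᵏ → Zᵏ in density as n → ∞ for every k ∈ ℕ if and only if there exists a full coupling (Ẑ₁, Ẑ₂, …, Ẑ) of Z₁, Z₂, …, Z, an ℕ-valued random variable N, and integers 0 ≤ k₁ ≤ k₂ ≤ … → ∞ such that Ẑₙ^{kₙ} = Ẑ^{kₙ} for all n ≥ N. -/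
open MeasureTheory Filter
open scoped ENNReal

/-- `μs n → μ` in density: w.r.t. some σ-finite dominating measure, the liminf of
the densities of the `μs n` equals the density of `μ` almost everywhere. -/
def ConvInDensity {α : Type*} [MeasurableSpace α] (μs : ℕ → Measure α) (μ : Measure α) : Prop :=
  ∃ (lam : Measure α) (f : ℕ → α → ℝ≥0∞) (g : α → ℝ≥0∞),
    SigmaFinite lam ∧ (∀ n, Measurable (f n)) ∧ Measurable g ∧
    (∀ n, μs n = lam.withDensity (f n)) ∧ μ = lam.withDensity g ∧
    (∀ᵐ x ∂lam, liminf (fun n => f n x) atTop = g x)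

/-- Projection onto the first `k` coordinates of an element of
`(E¹ × E² × ⋯) × E^∞`. -/
def proj (E : ℕ → Type) (Einf : Type) (k : ℕ) (z : (∀ i, E i) × Einf) :
    ∀ i : Fin k, E i := fun i => z.1 i

/-!
For the direct implication, let `U` be uniform on `[0, 1]` and independent of `Z`. Call `Zᵏ`
accepted at time `n` if `U * P(Zᵏ = i) ≤ P(Zₙᵏ = i)` at `i = Zᵏ`. Convergence in density bounds
`P(Zᵏ = i)` by `liminf P(Zₙᵏ = i)`, so for fixed `k` almost surely `Zᵏ` is accepted at all large
times, and a Borel–Cantelli argument lets `k = kₙ` grow with `n` so slowly that this persists. At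
most `P(Zₙᵏ = i)` of the probability is accepted at `i`, so marking a copy of `Zₙ` by its value
`Zₙᵏ` with a suitable probability depending on that value yields a pair whose mark has the same
law as the accepted value. Gluing these pairs to `(Z, U)` along the marks gives the coupling.
Conversely, `{Ẑₙʲ = i}` and `{Ẑʲ = i}` eventually agree almost surely, so their probabilities
converge.
-/

open ProbabilityTheory Set
open scoped unitInterval Topology

universe u v

section Density

variable {α : Type*} [MeasurableSpace α] [MeasurableSingletonClass α]
  {μs : ℕ → Measure α} {μ : Measure α}

lemma withDensity_count_singleton [Countable α] (μ : Measure α) :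
    Measure.count.withDensity (fun i => μ {i}) = μ := by
  rw [count_withDensity, Measure.sum_smul_dirac]

lemma convInDensity_of_tendsto_singleton [Countable α]
    (h : ∀ i, Tendsto (fun n => μs n {i}) atTop (𝓝 (μ {i}))) : ConvInDensity μs μ :=
  ⟨Measure.count, fun n i => μs n {i}, fun i => μ {i}, inferInstance,
    fun _ => measurable_of_countable _, measurable_of_countable _,
    fun n => (withDensity_count_singleton (μs n)).symm, (withDensity_count_singleton μ).symm,
    ae_of_all _ fun i => (h i).liminf_eq⟩

lemma ConvInDensity.measure_singleton_le_liminf (h : ConvInDensity μs μ) (i : α) :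
    μ {i} ≤ liminf (fun n => μs n {i}) atTop := by
  obtain ⟨lam, f, g, _, -, -, hf, hg, hlim⟩ := h
  have withDensity_singleton (φ : α → ℝ≥0∞) : lam.withDensity φ {i} = φ i * lam {i} := by
    rw [withDensity_apply _ (measurableSet_singleton i), lintegral_singleton]
  simp only [hf, hg, withDensity_singleton]
  rcases eq_or_ne (lam {i}) 0 with hi | hi
  · simp only [hi, mul_zero, zero_le]
  have hlim_i : liminf (fun n => f n i) atTop = g i := by
    by_contra hne
    exact hi (measure_mono_null (singleton_subset_iff.2 hne) hlim)
  rw [ENNReal.liminf_mul_const_of_ne_top measure_singleton_lt_top.ne, hlim_i, mul_comm]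

end Density

section Eventually

variable {Y : Type*} [MeasurableSpace Y] {ν : Measure Y}

lemma tendsto_measure_iUnion_ge_compl [IsFiniteMeasure ν] {A : ℕ → Set Y}
    (hA : ∀ n, MeasurableSet (A n)) (h : ∀ᵐ y ∂ν, ∀ᶠ n in atTop, y ∈ A n) :
    Tendsto (fun n => ν (⋃ m ≥ n, (A m)ᶜ)) atTop (𝓝 0) := by
  rw [← measure_empty (μ := ν)]
  refine tendsto_measure_of_ae_tendsto_indicator_of_isFiniteMeasure atTop .empty
    (fun n => .iUnion fun m => .iUnion fun _ => (hA m).compl) ?_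
  filter_upwards [h] with y hy
  filter_upwards [eventually_forall_ge_atTop.2 hy] with n hn
  simpa using hn

lemma exists_monotone_tendsto_eventually_le (M : ℕ → ℕ) :
    ∃ k : ℕ → ℕ, Monotone k ∧ Tendsto k atTop atTop ∧ ∀ᶠ n in atTop, M (k n) ≤ n := by
  refine ⟨fun n => Nat.findGreatest (M · ≤ n) n,
    fun a b hab => Nat.findGreatest_mono (fun _ hk => hk.trans hab) hab,
    tendsto_atTop.2 fun k => ?_, ?_⟩
  · filter_upwards [eventually_ge_atTop k, eventually_ge_atTop (M k)] with n hk hM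
    exact Nat.le_findGreatest hk hM
  · filter_upwards [eventually_ge_atTop (M 0)] with n hn
    exact Nat.findGreatest_spec (P := (M · ≤ n)) n.zero_le hn

lemma exists_monotone_tendsto_ae_eventually_mem [IsFiniteMeasure ν] {A : ℕ → ℕ → Set Y}
    (hA : ∀ k n, MeasurableSet (A k n)) (h : ∀ k, ∀ᵐ y ∂ν, ∀ᶠ n in atTop, y ∈ A k n) :
    ∃ k : ℕ → ℕ, Monotone k ∧ Tendsto k atTop atTop ∧
      ∀ᵐ y ∂ν, ∀ᶠ n in atTop, y ∈ A (k n) n := by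
  have exists_small (k : ℕ) : ∃ n, ν (⋃ m ≥ n, (A k m)ᶜ) ≤ 2⁻¹ ^ k :=
    ((tendsto_measure_iUnion_ge_compl (hA k) (h k)).eventually_le_const
      (ENNReal.pow_pos (by norm_num) k)).exists
  choose M hM using exists_small
  have hsum : ∑' k, ν (⋃ m ≥ M k, (A k m)ᶜ) ≠ ∞ :=
    ne_top_of_le_ne_top (by simp [ENNReal.tsum_geometric]) (ENNReal.tsum_le_tsum hM)
  obtain ⟨k, hmono, htop, hle⟩ := exists_monotone_tendsto_eventually_le M
  refine ⟨k, hmono, htop, ?_⟩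
  filter_upwards [ae_eventually_notMem hsum] with y hy
  filter_upwards [htop.eventually hy, hle] with n hn hMn
  by_contra hmem
  exact hn (mem_iUnion₂.2 ⟨n, hMn, hmem⟩)

lemma exists_measurable_nat_forall_ge_mem {A : ℕ → Set Y} (hA : ∀ n, MeasurableSet (A n))
    (h : ∀ᵐ y ∂ν, ∀ᶠ n in atTop, y ∈ A n) :
    ∃ N : Y → ℕ, Measurable N ∧ ∀ᵐ y ∂ν, ∀ n, N y ≤ n → y ∈ A n := by
  classical
  let tail (n : ℕ) : Set Y := ⋂ m ≥ n, A m
  have htail (n : ℕ) : MeasurableSet (tail n) := .iInter fun m => .iInter fun _ => hA m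
  -- Off the union of the tails every `n` qualifies, so that `Nat.find` is defined everywhere.
  have hfind (y : Y) : ∃ n, y ∈ tail n ∪ (⋃ n, tail n)ᶜ := by
    by_cases hy : y ∈ ⋃ n, tail n
    · exact (mem_iUnion.1 hy).imp fun _ => Or.inl
    · exact ⟨0, Or.inr hy⟩
  refine ⟨fun y => Nat.find (hfind y),
    measurable_find hfind fun n => (htail n).union (MeasurableSet.iUnion htail).compl, ?_⟩
  filter_upwards [h] with y hy n hn
  obtain ⟨a, ha⟩ := eventually_atTop.1 hy
  have hy_tail : y ∈ ⋃ n, tail n := mem_iUnion.2 ⟨a, mem_iInter₂.2 ha⟩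
  exact mem_iInter₂.1 ((Nat.find_spec (hfind y)).resolve_right (not_not.2 hy_tail)) n hn

end Eventually

section CountableFactor

variable {J X : Type*} [MeasurableSpace J] [Countable J] [MeasurableSingletonClass J]
  [MeasurableSpace X]

lemma prod_measure_ext_of_singleton {γ γ' : Measure (J × X)} [IsFiniteMeasure γ]
    (h : ∀ j A, MeasurableSet A → γ ({j} ×ˢ A) = γ' ({j} ×ˢ A)) : γ = γ' := by
  refine Measure.ext_prod fun {s t} hs ht => ?_
  have hfst : (γ.restrict (univ ×ˢ t)).fst = (γ'.restrict (univ ×ˢ t)).fst := by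
    refine Measure.ext_of_singleton fun j => ?_
    have hj := measurableSet_singleton j
    rw [Measure.fst_apply hj, Measure.fst_apply hj, Measure.restrict_apply (measurable_fst hj),
      Measure.restrict_apply (measurable_fst hj), ← prod_univ, prod_inter_prod, inter_univ,
      univ_inter, h j t ht]
  have := congr($hfst s)
  rwa [Measure.fst_apply hs, Measure.fst_apply hs, Measure.restrict_apply (measurable_fst hs),
    Measure.restrict_apply (measurable_fst hs), ← prod_univ, prod_inter_prod, inter_univ,
    univ_inter] at this

lemma eq_of_forall_ne_measure_singleton_eq {μ μ' : Measure J} [IsProbabilityMeasure μ]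
    [IsProbabilityMeasure μ'] (j₀ : J) (h : ∀ j ≠ j₀, μ {j} = μ' {j}) : μ = μ' := by
  have hj₀ := measurableSet_singleton j₀
  have hcompl : μ.restrict {j₀}ᶜ = μ'.restrict {j₀}ᶜ := by
    refine Measure.ext_of_singleton fun j => ?_
    by_cases hj : j = j₀ <;> simp [hj, h]
  refine Measure.ext_of_singleton fun j => ?_
  rcases eq_or_ne j j₀ with rfl | hj
  · have := congr($hcompl univ)
    simp only [Measure.restrict_apply_univ, prob_compl_eq_one_sub hj₀] at this
    rwa [ENNReal.sub_right_inj ENNReal.one_ne_top prob_le_one prob_le_one] at this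
  · exact h j hj

lemma exists_isProbabilityMeasure_smul_eq [Nonempty X] (ρ : Measure X) [IsFiniteMeasure ρ] :
    ∃ P : Measure X, IsProbabilityMeasure P ∧ ρ univ • P = ρ := by
  let ρ' : FiniteMeasure X := ⟨ρ, inferInstance⟩
  refine ⟨ρ'.normalize, inferInstance, ?_⟩
  have hmass : (ρ' : Measure X) = ρ'.mass • (ρ'.normalize : Measure X) := by
    simpa using congr($(ρ'.self_eq_mass_smul_normalize).toMeasure)
  have huniv : ρ univ = ρ'.mass := (FiniteMeasure.ennreal_mass (μ := ρ')).symm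
  rw [huniv]
  exact hmass.symm

lemma exists_isMarkovKernel_fst_compProd_eq [Nonempty X] (γ : Measure (J × X))
    [IsFiniteMeasure γ] : ∃ κ : Kernel J X, IsMarkovKernel κ ∧ γ.fst ⊗ₘ κ = γ := by
  choose P hP hsmul using fun j => exists_isProbabilityMeasure_smul_eq
    (γ.restrict (Prod.fst ⁻¹' {j})).snd
  let κ : Kernel J X := Kernel.ofFunOfCountable P
  have hκ : IsMarkovKernel κ := ⟨hP⟩
  refine ⟨κ, hκ, prod_measure_ext_of_singleton fun j A hA => ?_⟩
  have hj := measurableSet_singleton j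
  calc (γ.fst ⊗ₘ κ) ({j} ×ˢ A) = γ (Prod.fst ⁻¹' {j}) * P j A := by
        rw [Measure.compProd_apply_prod hj hA, lintegral_singleton, Measure.fst_apply hj, mul_comm]
        rfl
    _ = (γ.restrict (Prod.fst ⁻¹' {j})).snd A := by
        simpa only [Measure.snd_univ, Measure.restrict_apply_univ, Measure.smul_apply, smul_eq_mul]
          using congr($(hsmul j) A)
    _ = γ ({j} ×ˢ A) := by
        rw [Measure.snd_apply hA, Measure.restrict_apply (measurable_snd hA), inter_comm,
          Set.prod_eq]

end CountableFactor

section Gluing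

variable {Y X : Type*} [MeasurableSpace Y] [MeasurableSpace X]

lemma measurable_eval_of_countable {S J : Type*} [MeasurableSpace J] [Countable J]
    [MeasurableSingletonClass J] {g : Y → J} (hg : Measurable g) (e : J → S) :
    Measurable fun ω : Y × (S → X) => ω.2 (e (g ω.1)) := by
  have heval : Measurable fun p : J × (S → X) => p.2 (e p.1) :=
    measurable_from_prod_countable_right fun j => measurable_pi_apply (e j)
  exact heval.comp ((hg.comp measurable_fst).prodMk measurable_snd)

lemma map_prod_infinitePi_eval_eq_compProd {S J : Type*} [MeasurableSpace J] [Countable J]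
    [MeasurableSingletonClass J] (ν : Measure Y) [IsProbabilityMeasure ν] (K : S → Measure X)
    [∀ s, IsProbabilityMeasure (K s)] {g : Y → J} (hg : Measurable g) {e : J → S}
    {κ : Kernel J X} [IsMarkovKernel κ] (hκ : ∀ j, κ j = K (e j)) :
    (ν.prod (Measure.infinitePi K)).map (fun ω => (g ω.1, ω.2 (e (g ω.1)))) =
      ν.map g ⊗ₘ κ := by
  have hmeas : Measurable fun ω : Y × (S → X) => (g ω.1, ω.2 (e (g ω.1))) :=
    (hg.comp measurable_fst).prodMk (measurable_eval_of_countable hg e)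
  have := Measure.isProbabilityMeasure_map (μ := ν) hg.aemeasurable
  refine prod_measure_ext_of_singleton fun j A hA => ?_
  have hj := measurableSet_singleton j
  have hpre : (fun ω : Y × (S → X) => (g ω.1, ω.2 (e (g ω.1)))) ⁻¹' ({j} ×ˢ A) =
      (g ⁻¹' {j}) ×ˢ (Function.eval (e j) ⁻¹' A) := by
    ext ω
    simp +contextual
  rw [Measure.map_apply hmeas (hj.prod hA), hpre, Measure.prod_prod,
    (measurePreserving_eval_infinitePi K (e j)).measure_preimage hA.nullMeasurableSet,
    Measure.compProd_apply_prod hj hA, lintegral_singleton, Measure.map_apply hg hj, hκ, mul_comm]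

lemma exists_extension_of_fst_eq_map {T : Type*} {J : T → Type*} [∀ t, MeasurableSpace (J t)]
    [∀ t, Countable (J t)] [∀ t, MeasurableSingletonClass (J t)]
    (ν : Measure Y) [IsProbabilityMeasure ν] {g : ∀ t, Y → J t} (hg : ∀ t, Measurable (g t))
    {γ : ∀ t, Measure (J t × X)} (hγ : ∀ t, (γ t).fst = ν.map (g t)) :
    ∃ (P : Measure (Y × ((Σ t, J t) → X))) (Z : T → Y × ((Σ t, J t) → X) → X),
      IsProbabilityMeasure P ∧ P.fst = ν ∧ (∀ t, Measurable (Z t)) ∧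
      ∀ t, P.map (fun ω => (g t ω.1, Z t ω)) = γ t := by
  have hprob (t : T) : IsProbabilityMeasure (γ t) := by
    have := Measure.isProbabilityMeasure_map (μ := ν) (hg t).aemeasurable
    exact ⟨by rw [← Measure.fst_univ, hγ, measure_univ]⟩
  have hX (t : T) : Nonempty X := (nonempty_of_isProbabilityMeasure (γ t)).map Prod.snd
  choose κ hκ hκγ using fun t => have := hX t; exists_isMarkovKernel_fst_compProd_eq (γ t)
  let K (s : Σ t, J t) : Measure X := κ s.1 s.2
  refine ⟨ν.prod (Measure.infinitePi K), fun t ω => ω.2 ⟨t, g t ω.1⟩, inferInstance,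
    Measure.fst_prod, fun t => measurable_eval_of_countable (hg t) (Sigma.mk t), fun t => ?_⟩
  rw [map_prod_infinitePi_eval_eq_compProd ν K (hg t) (e := Sigma.mk t) (κ := κ t) fun _ => rfl,
    ← hγ, hκγ]

end Gluing

section Thinning

instance {α β : Type*} [MeasurableSpace α] [MeasurableSpace β] [MeasurableSingletonClass α]
    [MeasurableSingletonClass β] : MeasurableSingletonClass (α ⊕ β) where
  measurableSet_singleton
    | .inl a => image_singleton (f := Sum.inl) ▸ (measurableSet_singleton a).inl_image
    | .inr b => image_singleton (f := Sum.inr) ▸ (measurableSet_singleton b).inr_image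

variable {ι X : Type*} [MeasurableSpace ι] [MeasurableSpace X]

/-- The joint law of `(L, Z)` where `Z` has law `R` and, given `Z = x`, the label `L` is
`Sum.inl (π x)` with probability `t (π x)` and the rejection mark `Sum.inr ()` otherwise. -/
noncomputable def thinning (R : Measure X) (π : X → ι) (t : ι → ℝ≥0∞) :
    Measure ((ι ⊕ Unit) × X) :=
  (R.withDensity (t ∘ π)).map (fun x => (.inl (π x), x)) +
    (R.withDensity (1 - t ∘ π)).map (fun x => (.inr (), x))

namespace thinning

variable {R : Measure X} {π : X → ι} {t : ι → ℝ≥0∞}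

lemma apply_prod (hπ : Measurable π) {s : Set (ι ⊕ Unit)} (hs : MeasurableSet s) {A : Set X}
    (hA : MeasurableSet A) :
    thinning R π t (s ×ˢ A) = R.withDensity (t ∘ π) (π ⁻¹' (Sum.inl ⁻¹' s) ∩ A) +
      R.withDensity (1 - t ∘ π) ((fun _ => .inr ()) ⁻¹' s ∩ A) := by
  have hinl : Measurable fun x => ((.inl (π x), x) : (ι ⊕ Unit) × X) :=
    (measurable_inl.comp hπ).prodMk measurable_id
  have hinr : Measurable fun x => ((.inr (), x) : (ι ⊕ Unit) × X) :=
    measurable_const.prodMk measurable_id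
  rw [thinning, Measure.add_apply, Measure.map_apply hinl (hs.prod hA),
    Measure.map_apply hinr (hs.prod hA)]
  rfl

lemma snd_eq [Countable ι] [MeasurableSingletonClass ι] (hπ : Measurable π) (ht : ∀ i, t i ≤ 1) :
    (thinning R π t).snd = R := by
  have htπ : Measurable (t ∘ π) := (measurable_of_countable t).comp hπ
  have hone : t ∘ π + (1 - t ∘ π) = 1 := add_tsub_cancel_of_le fun x => ht (π x)
  ext A hA
  rw [Measure.snd_apply hA, ← univ_prod, apply_prod hπ .univ hA]
  simp only [preimage_univ, univ_inter]
  rw [← Measure.add_apply, ← withDensity_add_left htπ, hone, withDensity_one]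

variable [MeasurableSingletonClass ι]

lemma apply_singleton_inl_prod (hπ : Measurable π) (i : ι) {A : Set X} (hA : MeasurableSet A) :
    thinning R π t ({.inl i} ×ˢ A) = R.withDensity (t ∘ π) (π ⁻¹' {i} ∩ A) := by
  have hinl : (Sum.inl : ι → ι ⊕ Unit) ⁻¹' {.inl i} = {i} := by ext; simp
  have hinr : (fun _ : X => (.inr () : ι ⊕ Unit)) ⁻¹' {.inl i} = ∅ := by ext; simp
  rw [apply_prod hπ (measurableSet_singleton _) hA, hinl, hinr, empty_inter, measure_empty,
    add_zero]

lemma fst_singleton_inl (hπ : Measurable π) (i : ι) :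
    (thinning R π t).fst {Sum.inl i} = t i * R.map π {i} := by
  have hi := measurableSet_singleton i
  rw [Measure.fst_apply (measurableSet_singleton _), ← prod_univ,
    apply_singleton_inl_prod hπ i .univ, inter_univ, withDensity_apply _ (hπ hi),
    setLIntegral_congr_fun (f := t ∘ π) (hπ hi) fun x hx => congrArg t hx,
    setLIntegral_const,
    Measure.map_apply hπ hi]

lemma ae_eq_of_fst_eq_inl [Countable ι] (hπ : Measurable π) :
    ∀ᵐ z ∂thinning R π t, ∀ i, z.1 = .inl i → π z.2 = i := by
  refine ae_all_iff.2 fun i => ?_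
  have hnull : thinning R π t ({.inl i} ×ˢ (π ⁻¹' {i})ᶜ) = 0 := by
    rw [apply_singleton_inl_prod hπ i (hπ (measurableSet_singleton i)).compl, inter_compl_self,
      measure_empty]
  filter_upwards [measure_eq_zero_iff_ae_notMem.1 hnull] with z hz hzi
  by_contra hne
  exact hz ⟨hzi, hne⟩

end thinning

lemma exists_coupling_of_singleton_inl_le [Countable ι] [MeasurableSingletonClass ι]
    (R : Measure X) [IsProbabilityMeasure R] {π : X → ι} (hπ : Measurable π)
    (μ : Measure (ι ⊕ Unit)) [IsProbabilityMeasure μ] (h : ∀ i, μ {.inl i} ≤ R.map π {i}) :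
    ∃ γ : Measure ((ι ⊕ Unit) × X), γ.fst = μ ∧ γ.snd = R ∧
      ∀ᵐ z ∂γ, ∀ i, z.1 = .inl i → π z.2 = i := by
  let t (i : ι) : ℝ≥0∞ := μ {.inl i} / R.map π {i}
  have hsnd : (thinning R π t).snd = R :=
    thinning.snd_eq hπ fun i => ENNReal.div_le_of_le_mul (by simpa using h i)
  have hprob : IsProbabilityMeasure (thinning R π t).fst :=
    ⟨by rw [Measure.fst_univ, ← Measure.snd_univ, hsnd, measure_univ]⟩
  refine ⟨thinning R π t, ?_, hsnd, thinning.ae_eq_of_fst_eq_inl hπ⟩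
  refine eq_of_forall_ne_measure_singleton_eq (.inr ()) ?_
  rintro (i | ⟨⟩) hi
  · rw [thinning.fst_singleton_inl hπ]
    exact ENNReal.div_mul_cancel' (fun hzero => by simpa [hzero] using h i)
      fun htop => absurd htop (measure_ne_top _ _)
  · exact absurd rfl hi

end Thinning

section Acceptance

variable {ι : Type*} [MeasurableSpace ι] {μ μ' : Measure ι}

/-- The pairs `(i, u)` that rejection sampling of `μ'` from `μ` accepts: under `μ.prod volume` the
value `i` is drawn and accepted with probability `min (μ {i}) (μ' {i})`. The condition
`u ≤ μ' {i} / μ {i}` is stated without division, so that atoms of mass zero are accepted. -/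
def acceptSet (μ μ' : Measure ι) : Set (ι × I) :=
  {y | ENNReal.ofReal y.2 * μ {y.1} ≤ μ' {y.1}}

open Classical in
/-- The outcome of rejection sampling: the sampled value if it is accepted, and the rejection mark
`Sum.inr ()` otherwise. -/
noncomputable def acceptLabel (μ μ' : Measure ι) (y : ι × I) : ι ⊕ Unit :=
  if y ∈ acceptSet μ μ' then .inl y.1 else .inr ()

lemma acceptLabel_preimage_singleton_inl (i : ι) : acceptLabel μ μ' ⁻¹' {.inl i} =
    {i} ×ˢ {u : I | ENNReal.ofReal u * μ {i} ≤ μ' {i}} := by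
  ext ⟨j, u⟩
  by_cases hacc : (j, u) ∈ acceptSet μ μ'
  · have hlabel : acceptLabel μ μ' (j, u) = .inl j := if_pos hacc
    simp only [mem_preimage, hlabel, mem_singleton_iff, Sum.inl.injEq, mem_prod, mem_ofPred_eq]
    exact ⟨by rintro rfl; exact ⟨rfl, hacc⟩, And.left⟩
  · have hlabel : acceptLabel μ μ' (j, u) = .inr () := if_neg hacc
    simp only [mem_preimage, hlabel, mem_singleton_iff, reduceCtorEq, mem_prod, mem_ofPred_eq,
      false_iff]
    rintro ⟨rfl, hu⟩
    exact hacc hu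

variable [MeasurableSingletonClass ι]

lemma measurableSet_acceptSet [Countable ι] : MeasurableSet (acceptSet μ μ') := by
  have hatom (ρ : Measure ι) : Measurable fun y : ι × I => ρ {y.1} :=
    (measurable_of_countable fun i => ρ {i}).comp measurable_fst
  have hofReal : Measurable fun y : ι × I => ENNReal.ofReal y.2 := by fun_prop
  exact measurableSet_le (hofReal.mul (hatom μ)) (hatom μ')

lemma measurable_acceptLabel [Countable ι] : Measurable (acceptLabel μ μ') :=
  Measurable.ite measurableSet_acceptSet (measurable_inl.comp measurable_fst) measurable_const

lemma volume_unitInterval_ofReal_le (c : ℝ≥0∞) : volume {u : I | ENNReal.ofReal u ≤ c} ≤ c := by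
  rcases le_or_gt 1 c with hc | hc
  · exact prob_le_one.trans hc
  have hset : {u : I | ENNReal.ofReal u ≤ c} =
      Iic ⟨c.toReal, ENNReal.toReal_nonneg, ENNReal.toReal_mono ENNReal.one_ne_top hc.le⟩ := by
    ext u
    simp [ENNReal.ofReal_le_iff_le_toReal hc.ne_top, ← Subtype.coe_le_coe]
  rw [hset, unitInterval.volume_Iic, ENNReal.ofReal_toReal hc.ne_top]

lemma mul_volume_unitInterval_ofReal_mul_le {p : ℝ≥0∞} (hp : p ≠ ∞) (q : ℝ≥0∞) :
    p * volume {u : I | ENNReal.ofReal u * p ≤ q} ≤ q := by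
  rcases eq_or_ne p 0 with rfl | hp₀
  · simp only [zero_mul, zero_le]
  calc p * volume {u : I | ENNReal.ofReal u * p ≤ q}
      = p * volume {u : I | ENNReal.ofReal u ≤ q / p} := by
        simp only [ENNReal.le_div_iff_mul_le (.inl hp₀) (.inl hp)]
    _ ≤ p * (q / p) := by gcongr; exact volume_unitInterval_ofReal_le _
    _ ≤ q := ENNReal.mul_div_le

lemma map_acceptLabel_singleton_inl_le [Countable ι] [IsFiniteMeasure μ] (i : ι) :
    (μ.prod volume).map (acceptLabel μ μ') {.inl i} ≤ μ' {i} := by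
  rw [Measure.map_apply measurable_acceptLabel (measurableSet_singleton _),
    acceptLabel_preimage_singleton_inl, Measure.prod_prod]
  exact mul_volume_unitInterval_ofReal_mul_le (measure_ne_top μ _) _

lemma ConvInDensity.ae_eventually_mem_acceptSet [Countable ι] [IsFiniteMeasure μ]
    {μs : ℕ → Measure ι} (h : ConvInDensity μs μ) :
    ∀ᵐ y ∂μ.prod (volume : Measure I), ∀ᶠ n in atTop, y ∈ acceptSet μ (μs n) := by
  have hatom : ∀ᵐ i ∂μ, μ {i} ≠ 0 := by
    rw [ae_iff_of_countable]
    exact fun i hi => hi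
  have hlt_one : ∀ᵐ u : I, u ≠ 1 := Measure.ae_ne volume 1
  filter_upwards [Measure.quasiMeasurePreserving_fst.ae hatom,
    Measure.quasiMeasurePreserving_snd.ae hlt_one] with ⟨i, u⟩ hi hu
  have hlt : ENNReal.ofReal u * μ {i} < μ {i} := by
    have hu' : ENNReal.ofReal u < 1 :=
      ENNReal.ofReal_lt_one.2 (unitInterval.lt_one_iff_ne_one.2 hu)
    simpa only [one_mul] using ENNReal.mul_lt_mul_left hi (measure_ne_top μ _) hu'
  exact (eventually_lt_of_lt_liminf (hlt.trans_le (h.measure_singleton_le_liminf i))).mono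
    fun n hn => hn.le

end Acceptance

section Coupling

variable {X : Type u} [MeasurableSpace X]

lemma exists_extension_of_map_singleton_inl_le {Y : Type*} [MeasurableSpace Y] {T : Type*}
    {ι : T → Type*} [∀ t, Countable (ι t)] [∀ t, MeasurableSpace (ι t)]
    [∀ t, MeasurableSingletonClass (ι t)] {π : ∀ t, X → ι t} (hπ : ∀ t, Measurable (π t))
    (R : T → Measure X) [∀ t, IsProbabilityMeasure (R t)] [Countable T]
    (ν : Measure Y) [IsProbabilityMeasure ν] {g : ∀ t, Y → ι t ⊕ Unit}
    (hg : ∀ t, Measurable (g t)) (h : ∀ t i, ν.map (g t) {.inl i} ≤ (R t).map (π t) {i}) :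
    ∃ (P : Measure (Y × ((Σ t, ι t ⊕ Unit) → X))) (Z : T → Y × ((Σ t, ι t ⊕ Unit) → X) → X),
      IsProbabilityMeasure P ∧ P.fst = ν ∧ (∀ t, Measurable (Z t)) ∧ (∀ t, P.map (Z t) = R t) ∧
      ∀ᵐ ω ∂P, ∀ t i, g t ω.1 = .inl i → π t (Z t ω) = i := by
  have hprob (t : T) := Measure.isProbabilityMeasure_map (μ := ν) (hg t).aemeasurable
  choose γ hfst hsnd hγ using fun t =>
    exists_coupling_of_singleton_inl_le (R t) (hπ t) (ν.map (g t)) (h t)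
  obtain ⟨P, Z, hP, hPν, hZ, hjoint⟩ := exists_extension_of_fst_eq_map ν hg hfst
  have hgfst (t : T) : Measurable fun ω : Y × ((Σ t, ι t ⊕ Unit) → X) => g t ω.1 :=
    (hg t).comp measurable_fst
  refine ⟨P, Z, hP, hPν, hZ, fun t => ?_, ae_all_iff.2 fun t => ?_⟩
  · rw [← hsnd, ← hjoint, Measure.snd_map_prodMk (hgfst t)]
  · exact ae_of_ae_map ((hgfst t).prodMk (hZ t)).aemeasurable (by rw [hjoint]; exact hγ t)

variable {ι : ℕ → Type v} [∀ k, Countable (ι k)] [∀ k, MeasurableSpace (ι k)]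
  [∀ k, MeasurableSingletonClass (ι k)] {π : ∀ k, X → ι k}

lemma exists_coupling_of_convInDensity (hπ : ∀ k, Measurable (π k)) {Qn : ℕ → Measure X}
    {Q : Measure X} [∀ n, IsProbabilityMeasure (Qn n)] [IsProbabilityMeasure Q]
    (h : ∀ k, ConvInDensity (fun n => (Qn n).map (π k)) (Q.map (π k))) :
    ∃ (Ω : Type (max u v)) (_ : MeasurableSpace Ω) (P : Measure Ω), IsProbabilityMeasure P ∧
      ∃ (Zh : ℕ → Ω → X) (Z : Ω → X) (k : ℕ → ℕ), Monotone k ∧ Tendsto k atTop atTop ∧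
        (∀ n, Measurable (Zh n)) ∧ Measurable Z ∧ (∀ n, P.map (Zh n) = Qn n) ∧ P.map Z = Q ∧
        ∀ᵐ ω ∂P, ∀ᶠ n in atTop, π (k n) (Zh n ω) = π (k n) (Z ω) := by
  have (k : ℕ) := Measure.isProbabilityMeasure_map (μ := Q) (hπ k).aemeasurable
  let ν : Measure (X × I) := Q.prod volume
  let πI (k : ℕ) : X × I → ι k × I := Prod.map (π k) id
  have hπI (k : ℕ) : MeasurePreserving (πI k) ν ((Q.map (π k)).prod volume) :=
    ((hπ k).measurePreserving Q).prod (.id volume)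
  obtain ⟨k, hmono, htop, haccept⟩ := exists_monotone_tendsto_ae_eventually_mem (ν := ν)
    (A := fun k n => πI k ⁻¹' acceptSet (Q.map (π k)) ((Qn n).map (π k)))
    (fun k n => (hπI k).measurable measurableSet_acceptSet)
    (fun k => (hπI k).quasiMeasurePreserving.ae (h k).ae_eventually_mem_acceptSet)
  let g (n : ℕ) : X × I → ι (k n) ⊕ Unit :=
    acceptLabel (Q.map (π (k n))) ((Qn n).map (π (k n))) ∘ πI (k n)
  have hg (n : ℕ) : Measurable (g n) := measurable_acceptLabel.comp (hπI (k n)).measurable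
  obtain ⟨P, Zh, hP, hPν, hZh, hlaw, hlabel⟩ :=
    exists_extension_of_map_singleton_inl_le (fun n => hπ (k n)) Qn ν hg fun n i => by
      rw [← Measure.map_map measurable_acceptLabel (hπI (k n)).measurable, (hπI (k n)).map_eq]
      exact map_acceptLabel_singleton_inl_le i
  refine ⟨_, inferInstance, P, hP, Zh, fun ω => ω.1.1, k, hmono, htop, hZh, by fun_prop, hlaw,
    ?_, ?_⟩
  · calc P.map (fun ω => ω.1.1) = P.fst.fst := (Measure.map_map measurable_fst measurable_fst).symm
      _ = Q := by rw [hPν, Measure.fst_prod]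
  · rw [← hPν] at haccept
    filter_upwards [hlabel, ae_of_ae_map measurable_fst.aemeasurable haccept] with ω hω hacc
    filter_upwards [hacc] with n hn
    exact hω n _ (if_pos hn)

lemma convInDensity_of_coupling (hπ : ∀ k, Measurable (π k))
    (hrefine : ∀ j k, j ≤ k → ∀ x y, π k x = π k y → π j x = π j y) {Ω : Type*}
    [MeasurableSpace Ω] {P : Measure Ω} [IsFiniteMeasure P] {Zh : ℕ → Ω → X} {Z : Ω → X}
    {k : ℕ → ℕ} (hk : Tendsto k atTop atTop) (hZh : ∀ n, Measurable (Zh n)) (hZ : Measurable Z)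
    (h : ∀ᵐ ω ∂P, ∀ᶠ n in atTop, π (k n) (Zh n ω) = π (k n) (Z ω)) (j : ℕ) :
    ConvInDensity (fun n => (P.map (Zh n)).map (π j)) ((P.map Z).map (π j)) := by
  refine convInDensity_of_tendsto_singleton fun i => ?_
  have hi := measurableSet_singleton i
  simp only [Measure.map_apply (hπ j) hi, Measure.map_apply (hZh _) (hπ j hi),
    Measure.map_apply hZ (hπ j hi)]
  refine tendsto_measure_of_ae_tendsto_indicator_of_isFiniteMeasure atTop (hZ (hπ j hi))
    (fun n => hZh n (hπ j hi)) ?_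
  filter_upwards [h] with ω hω
  filter_upwards [hω, hk.eventually_ge_atTop j] with n hn hj
  simp only [mem_preimage, hrefine j (k n) hj _ _ hn]

theorem stmt12_general (hπ : ∀ k, Measurable (π k))
    (hrefine : ∀ j k, j ≤ k → ∀ x y, π k x = π k y → π j x = π j y) (Qn : ℕ → Measure X)
    (Q : Measure X) [∀ n, IsProbabilityMeasure (Qn n)] [IsProbabilityMeasure Q] :
    (∀ k, ConvInDensity (fun n => (Qn n).map (π k)) (Q.map (π k))) ↔
      ∃ (Ω : Type (max u v)) (_ : MeasurableSpace Ω) (Pr : Measure Ω), IsProbabilityMeasure Pr ∧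
        ∃ (Zh : ℕ → Ω → X) (Z : Ω → X) (N : Ω → ℕ) (k : ℕ → ℕ),
          Monotone k ∧ Tendsto k atTop atTop ∧
          (∀ n, Measurable (Zh n)) ∧ Measurable Z ∧ Measurable N ∧
          (∀ n, Pr.map (Zh n) = Qn n) ∧ Pr.map Z = Q ∧
          (∀ᵐ ω ∂Pr, ∀ n, N ω ≤ n → π (k n) (Zh n ω) = π (k n) (Z ω)) := by
  constructor
  · intro h
    obtain ⟨Ω, _, Pr, hPr, Zh, Z, k, hmono, htop, hZh, hZ, hlaws, hlaw, hagree⟩ :=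
      exists_coupling_of_convInDensity hπ h
    obtain ⟨N, hN, hN_agree⟩ := exists_measurable_nat_forall_ge_mem
      (A := fun n => {ω | π (k n) (Zh n ω) = π (k n) (Z ω)})
      (fun n => measurableSet_eq_fun ((hπ (k n)).comp (hZh n)) ((hπ (k n)).comp hZ)) hagree
    exact ⟨Ω, _, Pr, hPr, Zh, Z, N, k, hmono, htop, hZh, hZ, hN, hlaws, hlaw, hN_agree⟩
  · rintro ⟨Ω, _, Pr, _, Zh, Z, N, k, -, htop, hZh, hZ, -, hlaws, hlaw, hagree⟩
    simp only [← hlaws, ← hlaw]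
    exact convInDensity_of_coupling hπ hrefine htop hZh hZ
      (hagree.mono fun ω hω => (eventually_ge_atTop (N ω)).mono hω)

end Coupling

section Proj

variable {E : ℕ → Type} {Einf : Type}

lemma measurable_proj [∀ i, MeasurableSpace (E i)] [MeasurableSpace Einf] (k : ℕ) :
    Measurable (proj E Einf k) :=
  measurable_pi_lambda _ fun i => (measurable_pi_apply (i : ℕ)).comp measurable_fst

lemma proj_eq_of_le {j k : ℕ} (hjk : j ≤ k) {x y : (∀ i, E i) × Einf}
    (h : proj E Einf k x = proj E Einf k y) : proj E Einf j x = proj E Einf j y :=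
  funext fun i => congrFun h (Fin.castLE hjk i)

end Proj

/-- Corollary 2 (full coupling): if the finite-time state spaces are countable
and discrete, then `Zₙᵏ → Zᵏ` in density for every `k` iff there exist a full
coupling `(Ẑ₁, Ẑ₂, …, Ẑ)` of `Z₁, Z₂, …, Z`, an `ℕ`-valued random variable `N`
and integers `0 ≤ k₁ ≤ k₂ ≤ … → ∞` such that `Ẑₙ^{kₙ} = Ẑ^{kₙ}` for `n ≥ N`. -/
theorem stmt12 (E : ℕ → Type) [∀ i, Countable (E i)] [∀ i, MeasurableSpace (E i)]
    [∀ i, MeasurableSingletonClass (E i)]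
    (hdisc : ∀ i, ∀ A : Set (E i), MeasurableSet A)
    (Einf : Type) [MeasurableSpace Einf]
    (Qn : ℕ → Measure ((∀ i, E i) × Einf)) (Q : Measure ((∀ i, E i) × Einf))
    [∀ n, IsProbabilityMeasure (Qn n)] [IsProbabilityMeasure Q] :
    (∀ k : ℕ, ConvInDensity (fun n => (Qn n).map (proj E Einf k))
        (Q.map (proj E Einf k))) ↔
      ∃ (Ω : Type) (_ : MeasurableSpace Ω) (Pr : Measure Ω),
        IsProbabilityMeasure Pr ∧
        ∃ (Zh : ℕ → Ω → (∀ i, E i) × Einf) (Z : Ω → (∀ i, E i) × Einf) (N : Ω → ℕ)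
          (k : ℕ → ℕ),
          Monotone k ∧ Tendsto k atTop atTop ∧
          (∀ n, Measurable (Zh n)) ∧ Measurable Z ∧ Measurable N ∧
          (∀ n, Pr.map (Zh n) = Qn n) ∧ Pr.map Z = Q ∧
          (∀ᵐ ω ∂Pr, ∀ n, N ω ≤ n →
            proj E Einf (k n) (Zh n ω) = proj E Einf (k n) (Z ω)) :=
  stmt12_general measurable_proj (fun _ _ hjk _ _ => proj_eq_of_le hjk) Qn Q
end

section
/- Let E be a metric space with metric d and Borel σ-algebra 𝓔, and let X₁, X₂, …, X be random elements of E such that X takes values almost surely in a separable Borel set E₀. Then Xₙ → X in distribution as n → ∞ if and only if there exists a coupling (X̂₁, X̂₂, …, X̂) of X₁, X₂, …, X such that d(X̂ₙ, X̂) → 0 pointwise (everywhere on the underlying probability space, after removing a null event) as n → ∞. -/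
open MeasureTheory Filter
open scoped ENNReal BoundedContinuousFunction

/-!
For each `m` choose a finitely valued label `φ m` on `E` that is continuous `P`-almost everywhere
and whose fibers have diameter at most `ε m` outside a set of summably small `P`-measure. Weak
convergence gives `(1 - ε m) • P.map (φ m) ≤ (Pn n).map (φ m)` for all large `n`. Under this
domination `Pn n` is a mixture: with weight `1 - ε m`, sample `x ∼ P` and then `Pn n` conditioned on
the cell of `x`; with weight `ε m`, sample a remainder law. Realise all these mixtures from one
`x ∼ P`, one uniform `u` deciding for every `n` at once (keep the cell iff `ε m < u`), and
independent candidates for each `n` and cell. Let `m = M n → ∞` slowly enough for the domination to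
hold at every `n`. Since `u > 0`, the cell is kept for all large `n`, and by Borel–Cantelli it is
eventually small, so the `n`-th sample converges to `x`.
-/

open scoped Topology unitInterval

universe u

section Topology

variable {X Y : Type*} [TopologicalSpace X] [TopologicalSpace Y]

lemma mem_frontier_of_mem_frontier_preimage {f : X → Y} {s : Set Y} {x : X}
    (hf : ContinuousAt f x) (hx : x ∈ frontier (f ⁻¹' s)) : f x ∈ frontier s := by
  rw [frontier_eq_closure_inter_closure] at hx ⊢
  exact ⟨closure_mono (Set.image_preimage_subset f s) (mem_closure_image hf hx.1),
    closure_mono (Set.image_preimage_subset f sᶜ) (mem_closure_image hf hx.2)⟩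

open scoped Classical in
lemma continuousAt_piecewise_of_notMem_frontier {f g : X → Y} {s : Set X} {x : X}
    (hx : x ∉ frontier s) (hf : ContinuousAt f x) (hg : ContinuousAt g x) :
    ContinuousAt (s.piecewise f g) x := by
  rw [← Set.mem_compl_iff, compl_frontier_eq_union_interior] at hx
  rcases hx with hx | hx
  · exact hf.congr
      ((s.piecewise_eqOn f g).eventuallyEq_of_mem (mem_interior_iff_mem_nhds.1 hx)).symm
  · exact hg.congr
      ((s.piecewise_eqOn_compl f g).eventuallyEq_of_mem (mem_interior_iff_mem_nhds.1 hx)).symm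

end Topology

section LastHit

variable {E : Type*} [MeasurableSpace E] {B : ℕ → Set E} (hB : ∀ k, MeasurableSet (B k))

/-- The label attached to `x` by the first `N` members of a sequence of sets: `k + 1` for the last
`k < N` with `x ∈ B k`, and `0` if there is none. Its fibers disjointify the sets. -/
noncomputable def lastHit : ℕ → SimpleFunc E ℕ
  | 0 => SimpleFunc.const E 0
  | N + 1 => SimpleFunc.piecewise (B N) (hB N) (SimpleFunc.const E (N + 1)) (lastHit N)

open scoped Classical in
lemma lastHit_succ_apply (N : ℕ) (x : E) :
    lastHit hB (N + 1) x = if x ∈ B N then N + 1 else lastHit hB N x := by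
  simp [lastHit, Set.piecewise]

lemma mem_of_lastHit_eq_succ {N k : ℕ} {x : E} (h : lastHit hB N x = k + 1) : x ∈ B k := by
  induction N with
  | zero => simp [lastHit] at h
  | succ N ih =>
    rw [lastHit_succ_apply] at h
    split_ifs at h with hx
    · exact Nat.succ_injective h ▸ hx
    · exact ih h

lemma lastHit_ne_zero {N k : ℕ} {x : E} (hk : k < N) (hx : x ∈ B k) : lastHit hB N x ≠ 0 := by
  induction N with
  | zero => simp at hk
  | succ N ih =>
    rw [lastHit_succ_apply]
    split_ifs with hxN
    · exact N.succ_ne_zero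
    · exact ih ((Nat.lt_succ_iff_lt_or_eq.1 hk).resolve_right fun hkN ↦ hxN (hkN ▸ hx))

lemma continuousAt_lastHit [TopologicalSpace E] {x : E} (hx : ∀ k, x ∉ frontier (B k)) (N : ℕ) :
    ContinuousAt (lastHit hB N) x := by
  induction N with
  | zero => exact continuousAt_const
  | succ N ih => exact continuousAt_piecewise_of_notMem_frontier (hx N) continuousAt_const ih

lemma exists_fiber_lastHit_subset {N k : ℕ} {x : E} (hk : k < N) (hx : x ∈ B k) :
    ∃ l, x ∈ B l ∧ ∀ y, lastHit hB N y = lastHit hB N x → y ∈ B l := by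
  obtain ⟨l, hl⟩ := Nat.exists_eq_succ_of_ne_zero (lastHit_ne_zero hB hk hx)
  exact ⟨l, mem_of_lastHit_eq_succ hB hl, fun y hy ↦ mem_of_lastHit_eq_succ hB (hy.trans hl)⟩

end LastHit

section ContinuityPartition

variable {E : Type*} [PseudoMetricSpace E] [MeasurableSpace E] [OpensMeasurableSpace E]
  {P : Measure E} {E₀ : Set E} {ε : ℝ}

lemma exists_open_cover_null_frontier (P : Measure E) [SFinite P]
    (hsep : TopologicalSpace.IsSeparable E₀) (hε : 0 < ε) :
    ∃ B : ℕ → Set E, (∀ k, IsOpen (B k)) ∧ (∀ k, P (frontier (B k)) = 0) ∧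
      (∀ k, ∀ x ∈ B k, ∀ y ∈ B k, dist x y ≤ ε) ∧ E₀ ⊆ ⋃ k, B k := by
  obtain ⟨c, hc, hE₀⟩ := hsep
  rcases c.eq_empty_or_nonempty with rfl | hne
  · exact ⟨fun _ ↦ ∅, by simpa using hE₀⟩
  obtain ⟨f, rfl⟩ := hc.exists_eq_range hne
  have hball (x : E) : ∃ r ∈ Set.Ioo (ε / 4) (ε / 2), P (frontier (Metric.ball x r)) = 0 := by
    simpa only [Metric.thickening_singleton] using
      exists_null_frontier_thickening P {x} (show ε / 4 < ε / 2 by linarith)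
  choose r hr hnull using hball
  refine ⟨fun k ↦ Metric.ball (f k) (r (f k)), fun k ↦ Metric.isOpen_ball, fun k ↦ hnull _,
    fun k x hx y hy ↦ ?_, fun x hx ↦ ?_⟩
  · have hrk := (hr (f k)).2
    rw [Metric.mem_ball] at hx hy
    linarith [dist_triangle_right x y (f k)]
  · obtain ⟨_, ⟨k, rfl⟩, hk⟩ := Metric.mem_closure_iff.1 (hE₀ hx) (ε / 4) (by positivity)
    exact Set.mem_iUnion.2 ⟨k, hk.trans (hr _).1⟩

lemma exists_measure_compl_biUnion_lt_le {α : Type*} [MeasurableSpace α] {μ : Measure α}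
    [IsFiniteMeasure μ] {B : ℕ → Set α} (hB : ∀ k, MeasurableSet (B k))
    (hcover : μ (⋃ k, B k)ᶜ = 0) {δ : ℝ≥0∞} (hδ : δ ≠ 0) :
    ∃ N, μ (⋃ k < N, B k)ᶜ ≤ δ := by
  have hanti : Antitone fun N ↦ (⋃ k < N, B k)ᶜ := fun M N hMN ↦
    Set.compl_subset_compl.2 (Set.biUnion_mono (fun k hk ↦ lt_of_lt_of_le hk hMN) fun _ _ ↦ le_rfl)
  have hmeas (N : ℕ) : MeasurableSet (⋃ k < N, B k)ᶜ :=
    (MeasurableSet.iUnion fun k ↦ .iUnion fun _ ↦ hB k).compl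
  have hlim : Tendsto (fun N ↦ μ (⋃ k < N, B k)ᶜ) atTop (𝓝 0) := by
    rw [← hcover, ← Set.biUnion_lt_eq_iUnion, Set.compl_iUnion]
    exact tendsto_measure_iInter_atTop (fun N ↦ (hmeas N).nullMeasurableSet) hanti
      ⟨0, measure_ne_top μ _⟩
  exact (hlim.eventually_le_const (pos_iff_ne_zero.2 hδ)).exists

lemma exists_simpleFunc_ae_continuousAt_measure_dist_gt_le [IsProbabilityMeasure P]
    (hsep : TopologicalSpace.IsSeparable E₀) (hE₀ : P E₀ = 1) (hε : 0 < ε) {δ : ℝ≥0∞}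
    (hδ : δ ≠ 0) :
    ∃ φ : SimpleFunc E ℕ, (∀ᵐ x ∂P, ContinuousAt φ x) ∧
      P {x | ∃ y, φ y = φ x ∧ ε < dist y x} ≤ δ := by
  obtain ⟨B, hopen, hnull, hdiam, hcover⟩ := exists_open_cover_null_frontier P hsep hε
  have hB (k : ℕ) : MeasurableSet (B k) := (hopen k).measurableSet
  have hcompl : P (⋃ k, B k)ᶜ = 0 :=
    (prob_compl_eq_zero_iff (.iUnion hB)).2 (prob_le_one.antisymm (hE₀ ▸ measure_mono hcover))
  obtain ⟨N, hN⟩ := exists_measure_compl_biUnion_lt_le hB hcompl hδ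
  refine ⟨lastHit hB N, ?_, (measure_mono ?_).trans hN⟩
  · have hfrontier : ∀ᵐ x ∂P, ∀ k, x ∉ frontier (B k) :=
      ae_all_iff.2 fun k ↦ measure_eq_zero_iff_ae_notMem.1 (hnull k)
    exact hfrontier.mono fun x hx ↦ continuousAt_lastHit hB hx N
  · rintro x ⟨y, hyx, hlt⟩ hx
    obtain ⟨k, hk, hxk⟩ := Set.mem_iUnion₂.1 hx
    obtain ⟨l, hxl, hl⟩ := exists_fiber_lastHit_subset hB hk hxk
    exact hlt.not_ge (hdiam l y (hl y hyx) x hxl)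

lemma exists_seq_simpleFunc_ae_eventually_dist_le [IsProbabilityMeasure P]
    (hsep : TopologicalSpace.IsSeparable E₀) (hE₀ : P E₀ = 1) {ε : ℕ → ℝ} (hε : ∀ m, 0 < ε m) :
    ∃ φ : ℕ → SimpleFunc E ℕ, (∀ m, ∀ᵐ x ∂P, ContinuousAt (φ m) x) ∧
      ∀ᵐ x ∂P, ∀ᶠ m in atTop, ∀ y, φ m y = φ m x → dist y x ≤ ε m := by
  obtain ⟨δ, hδ, hδ_sum⟩ := ENNReal.exists_pos_sum_of_countable' one_ne_zero ℕ
  choose φ hcont hdist using fun m ↦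
    exists_simpleFunc_ae_continuousAt_measure_dist_gt_le hsep hE₀ (hε m) (hδ m).ne'
  have hsum : ∑' m, P {x | ∃ y, φ m y = φ m x ∧ ε m < dist y x} ≠ ∞ :=
    ((ENNReal.tsum_le_tsum hdist).trans_lt (hδ_sum.trans ENNReal.one_lt_top)).ne
  refine ⟨φ, hcont, (ae_eventually_notMem hsum).mono fun x hx ↦ hx.mono fun m hm y hy ↦ ?_⟩
  exact not_lt.1 fun hlt ↦ hm ⟨y, hy, hlt⟩

end ContinuityPartition

section LabelLaw

lemma measure_le_of_singleton_le {ι : Type*} [MeasurableSpace ι] [Countable ι]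
    [MeasurableSingletonClass ι] {μ ν : Measure ι} (h : ∀ i, μ {i} ≤ ν {i}) : μ ≤ ν :=
  Measure.le_iff.2 fun s hs ↦ by
    rw [← μ.tsum_indicator_apply_singleton s hs, ← ν.tsum_indicator_apply_singleton s hs]
    exact ENNReal.tsum_le_tsum fun i ↦ Set.indicator_le_indicator (h i)

variable {E ι γ : Type*} [TopologicalSpace E] [MeasurableSpace E] [OpensMeasurableSpace E]
  [HasOuterApproxClosed E] [TopologicalSpace ι] [DiscreteTopology ι] {L : Filter γ}
  {μs : γ → ProbabilityMeasure E} {μ : ProbabilityMeasure E}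

lemma tendsto_measure_preimage_of_ae_continuousAt {φ : E → ι}
    (hμ : Tendsto μs L (𝓝 μ)) (hφ : ∀ᵐ x ∂(μ : Measure E), ContinuousAt φ x) (s : Set ι) :
    Tendsto (fun n ↦ (μs n : Measure E) (φ ⁻¹' s)) L (𝓝 ((μ : Measure E) (φ ⁻¹' s))) := by
  refine ProbabilityMeasure.tendsto_measure_of_null_frontier_of_tendsto' hμ ?_
  refine measure_mono_null (t := {x | ¬ContinuousAt φ x}) (fun x hx hcont ↦ ?_) hφ
  simpa [(isClopen_discrete s).frontier_eq] using mem_frontier_of_mem_frontier_preimage hcont hx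

lemma eventually_smul_map_le_map [MeasurableSpace ι] [Countable ι] [MeasurableSingletonClass ι]
    {φ : SimpleFunc E ι} (hμ : Tendsto μs L (𝓝 μ))
    (hφ : ∀ᵐ x ∂(μ : Measure E), ContinuousAt φ x) {c : ℝ≥0∞} (hc : c < 1) :
    ∀ᶠ n in L, c • (μ : Measure E).map φ ≤ (μs n : Measure E).map φ := by
  have hfiber (i : ι) :
      ∀ᶠ n in L, c * (μ : Measure E) (φ ⁻¹' {i}) ≤ (μs n : Measure E) (φ ⁻¹' {i}) := by
    rcases eq_or_ne ((μ : Measure E) (φ ⁻¹' {i})) 0 with h0 | h0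
    · simp [h0]
    · refine (tendsto_measure_preimage_of_ae_continuousAt hμ hφ {i}).eventually_const_le ?_
      simpa using ENNReal.mul_lt_mul_left h0 (measure_ne_top _ _) hc
  filter_upwards [(Finset.eventually_all φ.range).2 fun i _ ↦ hfiber i] with n hn
  refine measure_le_of_singleton_le fun i ↦ ?_
  rw [Measure.smul_apply, smul_eq_mul, Measure.map_apply φ.measurable (measurableSet_singleton i),
    Measure.map_apply φ.measurable (measurableSet_singleton i)]
  by_cases hi : i ∈ φ.range
  · exact hn i hi
  · simp [SimpleFunc.preimage_eq_empty_iff φ i |>.2 hi]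

end LabelLaw

section Disintegration

variable {E ι : Type*} [MeasurableSpace E] {μ : Measure E}

lemma exists_isProbabilityMeasure_smul_eq_restrict (μ : Measure E) [IsFiniteMeasure μ] {B : Set E}
    (hB : MeasurableSet B) (hne : B.Nonempty) :
    ∃ κ : Measure E, IsProbabilityMeasure κ ∧ (∀ᵐ x ∂κ, x ∈ B) ∧ μ B • κ = μ.restrict B := by
  rcases eq_or_ne (μ B) 0 with h0 | h0
  · obtain ⟨x, hx⟩ := hne
    refine ⟨.dirac x, inferInstance, (ae_dirac_iff hB).2 hx, ?_⟩
    rw [h0, zero_smul, Measure.restrict_eq_zero.2 h0]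
  · refine ⟨ProbabilityTheory.cond μ B, ProbabilityTheory.cond_isProbabilityMeasure h0,
      ProbabilityTheory.ae_cond_mem hB, ?_⟩
    rw [ProbabilityTheory.cond, smul_smul, ENNReal.mul_inv_cancel h0 (measure_ne_top μ B), one_smul]

variable [MeasurableSpace ι] [Countable ι] [MeasurableSingletonClass ι]

lemma sum_restrict_fiber (μ : Measure E) {φ : E → ι} (hφ : Measurable φ) :
    Measure.sum (fun i ↦ μ.restrict (φ ⁻¹' {i})) = μ := by
  rw [← Measure.restrict_iUnion (pairwise_disjoint_fiber φ)
    fun i ↦ hφ (measurableSet_singleton i), ← Set.preimage_iUnion, Set.iUnion_of_singleton,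
    Set.preimage_univ, Measure.restrict_univ]

lemma map_bind_eq_of_smul_eq_restrict_fiber {φ : E → ι} (hφ : Measurable φ) {κ : ι → Measure E}
    (hκ : ∀ i, μ (φ ⁻¹' {i}) • κ i = μ.restrict (φ ⁻¹' {i})) : (μ.map φ).bind κ = μ := by
  have hκm : Measurable κ := measurable_of_countable κ
  calc (μ.map φ).bind κ = Measure.sum fun i ↦ μ (φ ⁻¹' {i}) • κ i := by
        rw [Measure.map_eq_sum μ φ hφ, Measure.bind_sum _ _ hκm.aemeasurable]
        simp_rw [Measure.bind_smul, Measure.dirac_bind hκm]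
    _ = μ := by simp_rw [hκ, sum_restrict_fiber μ hφ]

lemma exists_fiberwise_disintegration (μ : Measure E) [IsProbabilityMeasure μ] {φ : E → ι}
    (hφ : Measurable φ) :
    ∃ κ : ι → Measure E, (∀ i, IsProbabilityMeasure (κ i)) ∧
      (∀ i ∈ Set.range φ, ∀ᵐ y ∂κ i, φ y = i) ∧ (μ.map φ).bind κ = μ := by
  have hfiber (i : ι) : ∃ κ : Measure E, IsProbabilityMeasure κ ∧
      (i ∈ Set.range φ → ∀ᵐ y ∂κ, φ y = i) ∧ μ (φ ⁻¹' {i}) • κ = μ.restrict (φ ⁻¹' {i}) := by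
    rcases (φ ⁻¹' {i}).eq_empty_or_nonempty with hempty | hne
    · refine ⟨μ, inferInstance, fun hi ↦ ?_, by simp [hempty]⟩
      exact absurd hempty (Set.preimage_singleton_nonempty.2 hi).ne_empty
    · obtain ⟨κ, hprob, hmem, hκ⟩ :=
        exists_isProbabilityMeasure_smul_eq_restrict μ (hφ (measurableSet_singleton i)) hne
      exact ⟨κ, hprob, fun _ ↦ hmem, hκ⟩
  choose κ hprob hmem hκ using hfiber
  exact ⟨κ, hprob, hmem, map_bind_eq_of_smul_eq_restrict_fiber hφ hκ⟩

end Disintegration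

section Mixture

variable {E α : Type*} [MeasurableSpace E] [MeasurableSpace α]

lemma exists_isProbabilityMeasure_smul_add_smul_eq {μ ν : Measure E} [IsProbabilityMeasure μ]
    [IsProbabilityMeasure ν] {a b : ℝ≥0∞} (hab : a + b = 1) (ha : a ≠ 0) (hle : b • ν ≤ μ) :
    ∃ ρ : Measure E, IsProbabilityMeasure ρ ∧ a • ρ + b • ν = μ := by
  have ha_top : a ≠ ∞ := fun h ↦ by simp [h] at hab
  have hb_top : b ≠ ∞ := fun h ↦ by simp [h] at hab
  have : IsFiniteMeasure (b • ν) := ν.smul_finite hb_top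
  have hmass : (μ - b • ν) Set.univ = a := by
    rw [Measure.sub_apply .univ hle, Measure.smul_apply, measure_univ, measure_univ, smul_eq_mul,
      mul_one, ← hab, ENNReal.add_sub_cancel_right hb_top]
  refine ⟨a⁻¹ • (μ - b • ν), ⟨?_⟩, ?_⟩
  · rw [Measure.smul_apply, hmass, smul_eq_mul, ENNReal.inv_mul_cancel ha ha_top]
  · rw [smul_smul, ENNReal.mul_inv_cancel ha ha_top, one_smul, Measure.sub_add_cancel_of_le hle]

lemma bind_mono_left {μ ν : Measure α} {κ : α → Measure E}
    (hκ : Measurable κ) (h : μ ≤ ν) : μ.bind κ ≤ ν.bind κ :=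
  Measure.le_iff.2 fun s hs ↦ by
    rw [Measure.bind_apply hs hκ.aemeasurable, Measure.bind_apply hs hκ.aemeasurable]
    exact lintegral_mono' h le_rfl

lemma isProbabilityMeasure_bind (μ : Measure α)
    [IsProbabilityMeasure μ] {κ : α → Measure E} (hκ : Measurable κ)
    [∀ a, IsProbabilityMeasure (κ a)] : IsProbabilityMeasure (μ.bind κ) :=
  ⟨by simp [Measure.bind_apply .univ hκ.aemeasurable]⟩

lemma bind_prod_volume_ite (P : Measure α) [IsProbabilityMeasure P]
    {κ : α → Measure E} (hκ : Measurable κ) (ρ : Measure E) (ε : I) :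
    ((P.prod (volume : Measure I)).bind fun q ↦ if ε < q.2 then κ q.1 else ρ) =
      ENNReal.ofReal ε • ρ + ENNReal.ofReal (1 - ε) • P.bind κ := by
  have hmeas : Measurable fun q : α × I ↦ if ε < q.2 then κ q.1 else ρ :=
    .ite (measurableSet_lt measurable_const measurable_snd) (hκ.comp measurable_fst)
      measurable_const
  ext s hs
  have hmeas_s : Measurable fun q : α × I ↦ (if ε < q.2 then κ q.1 else ρ) s :=
    (Measure.measurable_coe hs).comp hmeas
  have hκs : Measurable fun x ↦ κ x s := (Measure.measurable_coe hs).comp hκ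
  have hslice (x : α) : ∫⁻ u : I, (if ε < u then κ x else ρ) s =
      ENNReal.ofReal ε * ρ s + ENNReal.ofReal (1 - ε) * κ x s := by
    have hpiecewise : (fun u : I ↦ (if ε < u then κ x else ρ) s) =
        (Set.Ioi ε).piecewise (fun _ ↦ κ x s) fun _ ↦ ρ s := by
      ext u
      by_cases hu : ε < u <;> simp [hu]
    rw [hpiecewise, lintegral_piecewise measurableSet_Ioi, setLIntegral_const, setLIntegral_const,
      Set.compl_Ioi, unitInterval.volume_Ioi, unitInterval.volume_Iic]
    ring
  rw [Measure.bind_apply hs hmeas.aemeasurable,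
    lintegral_prod _ hmeas_s.aemeasurable]
  simp_rw [hslice]
  rw [lintegral_add_left measurable_const, lintegral_const, measure_univ, mul_one,
    lintegral_const_mul _ hκs]
  simp [Measure.bind_apply hs hκ.aemeasurable]

variable {ι : Type*} [MeasurableSpace ι]

/-- The label of `(x, u)`: the cell `φ x` of `x`, together with whether the cell is to be kept,
which happens with probability `1 - ε` when `u` is uniform. -/
noncomputable def keepLabel (φ : α → ι) (ε : I) (q : α × I) : Bool × ι := (decide (ε < q.2), φ q.1)

lemma measurable_keepLabel {φ : α → ι} (hφ : Measurable φ) (ε : I) :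
    Measurable (keepLabel φ ε) :=
  (measurable_to_bool <| by
    simpa [Set.preimage] using measurableSet_lt measurable_const measurable_snd).prodMk
    (hφ.comp measurable_fst)

lemma exists_keepLabel_disintegration [Countable ι] [MeasurableSingletonClass ι] {μ P : Measure E}
    [IsProbabilityMeasure μ] [IsProbabilityMeasure P] {φ : E → ι} (hφ : Measurable φ) {ε : I}
    (hε : 0 < ε) (hdom : ENNReal.ofReal (1 - ε) • P.map φ ≤ μ.map φ) :
    ∃ ν : Bool × ι → Measure E, (∀ p, IsProbabilityMeasure (ν p)) ∧
      (∀ p, ∀ᵐ y ∂ν p, p.1 → p.2 ∈ Set.range φ → φ y = p.2) ∧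
      ((P.prod (volume : Measure I)).bind fun q ↦ ν (keepLabel φ ε q)) = μ := by
  obtain ⟨κ, hκ, hfiber, hμ⟩ := exists_fiberwise_disintegration μ hφ
  have hκm : Measurable κ := measurable_of_countable κ
  have hκφ : Measurable fun x ↦ κ (φ x) := hκm.comp hφ
  have hbind : P.bind (fun x ↦ κ (φ x)) = (P.map φ).bind κ := by
    rw [Measure.bind, Measure.bind, Measure.map_map hκm hφ, Function.comp_def]
  have := isProbabilityMeasure_bind P hκφ
  have hle : ENNReal.ofReal (1 - ε) • P.bind (fun x ↦ κ (φ x)) ≤ μ := by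
    rw [hbind, ← Measure.bind_smul]
    exact (bind_mono_left hκm hdom).trans_eq hμ
  have hweights : ENNReal.ofReal ε + ENNReal.ofReal (1 - ε) = 1 := by
    rw [← ENNReal.ofReal_add ε.2.1 (sub_nonneg.2 ε.2.2), add_sub_cancel, ENNReal.ofReal_one]
  obtain ⟨ρ, hρ, hmix⟩ := exists_isProbabilityMeasure_smul_add_smul_eq hweights
    (ENNReal.ofReal_pos.2 hε).ne' hle
  refine ⟨fun p ↦ if p.1 then κ p.2 else ρ, ?_, ?_, ?_⟩
  · rintro ⟨_ | _, i⟩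
    exacts [hρ, hκ i]
  · rintro ⟨_ | _, i⟩
    · simp
    · by_cases hi : i ∈ Set.range φ
      · exact (hfiber i hi).mono fun y hy _ _ ↦ hy
      · exact .of_forall fun y _ hi' ↦ absurd hi' hi
  · simpa only [keepLabel, decide_eq_true_eq] using
      (bind_prod_volume_ite P hκφ ρ ε).trans hmix

end Mixture

section Select

variable {α ι E : Type*} [MeasurableSpace α] [MeasurableSpace E] [Countable ι]

lemma ae_prod_infinitePi_forall (Q : Measure α) (ν : ι → Measure E)
    [∀ i, IsProbabilityMeasure (ν i)] {p : ι → E → Prop} (hp : ∀ i, ∀ᵐ y ∂ν i, p i y) :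
    ∀ᵐ ω ∂Q.prod (Measure.infinitePi ν), ∀ i, p i (ω.2 i) := by
  refine Measure.quasiMeasurePreserving_snd.ae (p := fun f : ι → E ↦ ∀ i, p i (f i))
    (ae_all_iff.2 fun i ↦ ?_)
  exact (measurePreserving_eval_infinitePi ν i).quasiMeasurePreserving.ae (hp i)

variable [MeasurableSpace ι] [MeasurableSingletonClass ι] {j : α → ι}

/-- The entry, at the label `j a`, of a family `f` of candidates: with independent `f i ∼ ν i` this
samples from the law `ν (j a)` given `a`, simultaneously for any number of labellings `j`. -/
def select (j : α → ι) (ω : α × (ι → E)) : E := ω.2 (j ω.1)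

lemma measurable_select (hj : Measurable j) : Measurable (select (E := E) j) :=
  (measurable_from_prod_countable_right fun i ↦ measurable_pi_apply i :
    Measurable fun p : ι × (ι → E) ↦ p.2 p.1).comp
    ((hj.comp measurable_fst).prodMk measurable_snd)

lemma map_select (Q : Measure α) (ν : ι → Measure E) [∀ i, IsProbabilityMeasure (ν i)]
    (hj : Measurable j) :
    (Q.prod (Measure.infinitePi ν)).map (select j) = Q.bind fun a ↦ ν (j a) := by
  have hν : Measurable fun a ↦ ν (j a) := (measurable_of_countable ν).comp hj
  ext s hs
  rw [Measure.map_apply (measurable_select hj) hs, Measure.prod_apply (measurable_select hj hs),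
    Measure.bind_apply hs hν.aemeasurable]
  refine lintegral_congr fun a ↦ ?_
  rw [← Measure.infinitePi_map_eval ν (j a), Measure.map_apply (measurable_pi_apply _) hs]
  rfl

end Select

lemma exists_tendsto_atTop_forall {p : ℕ → ℕ → Prop} (h0 : ∀ n, p 0 n)
    (h : ∀ m, ∀ᶠ n in atTop, p m n) :
    ∃ M : ℕ → ℕ, Tendsto M atTop atTop ∧ ∀ n, p (M n) n := by
  classical
  refine ⟨fun n ↦ Nat.findGreatest (p · n) n, tendsto_atTop.2 fun m ↦ ?_,
    fun n ↦ Nat.findGreatest_spec (P := (p · n)) n.zero_le (h0 n)⟩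
  filter_upwards [h m, eventually_ge_atTop m] with n hn hmn
  exact Nat.le_findGreatest hmn hn

section Coupling

variable {E : Type u} [PseudoMetricSpace E] [MeasurableSpace E] {Pn : ℕ → Measure E}
  {P : Measure E}

/-- There is a coupling of the laws `Pn 0, Pn 1, …` and `P`: random elements `X 0, X 1, …` and `X'`
with these laws on one probability space, taken in the universe of `E`, such that `X n → X'` almost
surely. -/
def ExistsAETendstoCoupling (Pn : ℕ → Measure E) (P : Measure E) : Prop :=
  ∃ (Ω : Type u) (_ : MeasurableSpace Ω) (Pr : Measure Ω),
    IsProbabilityMeasure Pr ∧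
    ∃ (X : ℕ → Ω → E) (X' : Ω → E),
      (∀ n, Measurable (X n)) ∧ Measurable X' ∧
      (∀ n, Pr.map (X n) = Pn n) ∧ Pr.map X' = P ∧
      (∀ᵐ ω ∂Pr, Tendsto (fun n ↦ dist (X n ω) (X' ω)) atTop (𝓝 0))

lemma ExistsAETendstoCoupling.tendsto_integral [OpensMeasurableSpace E]
    (hcoupling : ExistsAETendstoCoupling Pn P) (h : E →ᵇ ℝ) :
    Tendsto (fun n ↦ ∫ x, h x ∂(Pn n)) atTop (𝓝 (∫ x, h x ∂P)) := by
  obtain ⟨Ω, _, Pr, _, X, X', hX, hX', hlaw, rfl, hlim⟩ := hcoupling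
  obtain rfl : (fun n ↦ Pr.map (X n)) = Pn := funext hlaw
  have hdistr : TendstoInDistribution X atTop X' (fun _ ↦ Pr) Pr :=
    tendstoInDistribution_of_ae_tendsto (fun n ↦ (hX n).aemeasurable) hX'.aemeasurable
      (hlim.mono fun ω hω ↦ tendsto_iff_dist_tendsto_zero.2 hω)
  exact ProbabilityMeasure.tendsto_iff_forall_integral_tendsto.1 hdistr.tendsto h

variable [∀ n, IsProbabilityMeasure (Pn n)] [IsProbabilityMeasure P]

lemma existsAETendstoCoupling_of_smul_map_le_map {ι : Type} [MeasurableSpace ι] [Countable ι]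
    [MeasurableSingletonClass ι] {φ : ℕ → E → ι} (hφ : ∀ n, Measurable (φ n)) {ε : ℕ → I}
    (hε : ∀ n, 0 < ε n) (hε_lim : Tendsto ε atTop (𝓝 0))
    (hdom : ∀ n, ENNReal.ofReal (1 - ε n) • P.map (φ n) ≤ (Pn n).map (φ n))
    (hdist : ∀ᵐ x ∂P, ∀ᶠ n in atTop, ∀ y, φ n y = φ n x → dist y x ≤ ε n) :
    ExistsAETendstoCoupling Pn P := by
  choose ν hν hfiber hlaw using fun n ↦ exists_keepLabel_disintegration (hφ n) (hε n) (hdom n)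
  let ν' : ℕ × Bool × ι → Measure E := fun p ↦ ν p.1 p.2
  have (p : ℕ × Bool × ι) : IsProbabilityMeasure (ν' p) := hν p.1 p.2
  let label (n : ℕ) (q : E × I) : ℕ × Bool × ι := (n, keepLabel (φ n) (ε n) q)
  have hlabel (n : ℕ) : Measurable (label n) :=
    measurable_const.prodMk (measurable_keepLabel (hφ n) (ε n))
  refine ⟨(E × I) × (ℕ × Bool × ι → E), inferInstance,
    (P.prod volume).prod (Measure.infinitePi ν'), inferInstance, fun n ↦ select (label n),
    fun ω ↦ ω.1.1, fun n ↦ measurable_select (hlabel n), by fun_prop,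
    fun n ↦ (map_select _ ν' (hlabel n)).trans (hlaw n), ?_, ?_⟩
  · exact (measurePreserving_fst.comp measurePreserving_fst).map_eq
  have hclose : ∀ᵐ ω ∂(P.prod (volume : Measure I)).prod (Measure.infinitePi ν'),
      ∀ᶠ n in atTop, ∀ y, φ n y = φ n ω.1.1 → dist y ω.1.1 ≤ ε n :=
    Measure.quasiMeasurePreserving_fst.ae (Measure.quasiMeasurePreserving_fst.ae hdist)
  have hpos : ∀ᵐ ω ∂(P.prod (volume : Measure I)).prod (Measure.infinitePi ν'), 0 < ω.1.2 :=
    Measure.quasiMeasurePreserving_fst.ae (Measure.quasiMeasurePreserving_snd.ae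
      ((Measure.ae_ne volume 0).mono fun u hu ↦ unitInterval.pos_iff_ne_zero.2 hu))
  have hkept : ∀ᵐ ω ∂(P.prod (volume : Measure I)).prod (Measure.infinitePi ν'),
      ∀ p : ℕ × Bool × ι, p.2.1 → p.2.2 ∈ Set.range (φ p.1) → φ p.1 (ω.2 p) = p.2.2 :=
    ae_prod_infinitePi_forall _ ν' fun p ↦ hfiber p.1 p.2
  filter_upwards [hclose, hpos, hkept] with ω hω_close hω_pos hω_kept
  refine squeeze_zero' (.of_forall fun n ↦ dist_nonneg) ?_
    ((continuous_subtype_val.tendsto (0 : I)).comp hε_lim)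
  filter_upwards [hω_close, hε_lim.eventually_lt_const hω_pos] with n hn hεn
  exact hn _ (hω_kept (label n ω.1) (decide_eq_true hεn) ⟨ω.1.1, rfl⟩)

theorem existsAETendstoCoupling_of_tendsto_integral [OpensMeasurableSpace E] {E₀ : Set E}
    (hsep : TopologicalSpace.IsSeparable E₀) (hE₀ : P E₀ = 1)
    (hlim : ∀ h : E →ᵇ ℝ, Tendsto (fun n ↦ ∫ x, h x ∂(Pn n)) atTop (𝓝 (∫ x, h x ∂P))) :
    ExistsAETendstoCoupling Pn P := by
  have hweak : Tendsto (β := ProbabilityMeasure E) (fun n ↦ ⟨Pn n, inferInstance⟩) atTop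
      (𝓝 ⟨P, inferInstance⟩) := ProbabilityMeasure.tendsto_iff_forall_integral_tendsto.2 hlim
  let ε (m : ℕ) : I := ⟨(1 / 2) ^ m, by positivity, pow_le_one₀ (by norm_num) (by norm_num)⟩
  have hε (m : ℕ) : 0 < (ε m : ℝ) := by positivity
  have hε_lim : Tendsto ε atTop (𝓝 0) :=
    tendsto_subtype_rng.2 (tendsto_pow_atTop_nhds_zero_of_lt_one (by norm_num) (by norm_num))
  obtain ⟨φ, hcont, hdist⟩ := exists_seq_simpleFunc_ae_eventually_dist_le hsep hE₀ hε
  have hdom (m : ℕ) : ∀ᶠ n in atTop,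
      ENNReal.ofReal (1 - ε m) • P.map (φ m) ≤ (Pn n).map (φ m) :=
    eventually_smul_map_le_map hweak (hcont m)
      (ENNReal.ofReal_lt_one.2 (sub_lt_self 1 (hε m)))
  have hdom_zero (n : ℕ) : ENNReal.ofReal (1 - ε 0) • P.map (φ 0) ≤ (Pn n).map (φ 0) := by
    simpa [ε] using Measure.zero_le _
  obtain ⟨M, hM, hdomM⟩ := exists_tendsto_atTop_forall hdom_zero hdom
  exact existsAETendstoCoupling_of_smul_map_le_map (fun n ↦ (φ (M n)).measurable)
    (fun n ↦ hε (M n)) (hε_lim.comp hM) hdomM (hdist.mono fun x hx ↦ hM.eventually hx)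

end Coupling

theorem stmt18_general {E : Type u} [PseudoMetricSpace E] [MeasurableSpace E]
    [OpensMeasurableSpace E] (Pn : ℕ → Measure E) (P : Measure E)
    [∀ n, IsProbabilityMeasure (Pn n)] [IsProbabilityMeasure P]
    {E₀ : Set E} (hsep : TopologicalSpace.IsSeparable E₀) (hE₀ : P E₀ = 1) :
    (∀ h : E →ᵇ ℝ, Tendsto (fun n ↦ ∫ x, h x ∂(Pn n)) atTop (𝓝 (∫ x, h x ∂P))) ↔
      ExistsAETendstoCoupling Pn P :=
  ⟨existsAETendstoCoupling_of_tendsto_integral hsep hE₀, fun h ↦ h.tendsto_integral⟩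

/-- Skorohod representation theorem (Dudley–Wichura version): if `X` takes
values a.s. in a separable Borel set, then `Xₙ → X` in distribution iff there
is a coupling `(X̂₁, X̂₂, …, X̂)` with `d(X̂ₙ, X̂) → 0` almost surely. -/
theorem stmt18 {E : Type} [MetricSpace E] [MeasurableSpace E] [BorelSpace E]
    (Pn : ℕ → Measure E) (P : Measure E)
    [∀ n, IsProbabilityMeasure (Pn n)] [IsProbabilityMeasure P]
    (E0 : Set E) (hE0 : MeasurableSet E0) (hsep : TopologicalSpace.IsSeparable E0)
    (hP1 : P E0 = 1) :
    (∀ h : E →ᵇ ℝ, Tendsto (fun n => ∫ x, h x ∂(Pn n)) atTop (nhds (∫ x, h x ∂P))) ↔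
      ∃ (Ω : Type) (_ : MeasurableSpace Ω) (Pr : Measure Ω),
        IsProbabilityMeasure Pr ∧
        ∃ (X : ℕ → Ω → E) (X' : Ω → E),
          (∀ n, Measurable (X n)) ∧ Measurable X' ∧
          (∀ n, Pr.map (X n) = Pn n) ∧ Pr.map X' = P ∧
          (∀ᵐ ω ∂Pr, Tendsto (fun n => dist (X n ω) (X' ω)) atTop (nhds 0)) :=
  stmt18_general Pn P hsep hP1
end
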